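/- Given modular data (I, 0, *, N, s), the subfield L of ℂ generated over ℚ by all the entries s_{ij} is a finite Galois extension of ℚ whose Galois group Gal(L/ℚ) is abelian. -/

import Mathlib

/-!
Write `L` for the field generated by the entries (`ModularData.entryField`) and `entry` for the
S-matrix regarded as a matrix over `L`. For fixed `j` the function
`i ↦ s i j / s 0 j` is a character of the fusion ring, by the Verlinde relation; its values are
algebraic, since multiplication by each of them preserves their finite-dimensional `ℚ`-span.
As `1 / (s 0 j)²` is the sum over `i` of `(s i j / s 0 j) * (s i* j / s 0 j)`, the number `s 0 j` is
algebraic, and so are all the entries.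

An embedding `φ : L → ℂ` carries characters to characters, hence column ratios to column ratios:
`φ (entry i j) / φ (entry 0 j) = s i k / s 0 k` with `k = π j`. The formula for `1 / (s 0 j)²` gives
`φ (entry 0 j)² = (s 0 k)²`, so `φ (entry i j) = ε j * s i (π j)` with `ε j = ±1`
(`ModularData.exists_galois_action`). In particular `φ` maps `L` into itself, and `L` is normal.

For two automorphisms `σ`, `τ`, let `σ` act on the row index (using the symmetry of `s`) and `τ`
on the column index. Both `σ (τ (entry i j))` and `τ (σ (entry i j))` are then equal to
`ε_σ i * ε_τ j * s (π_σ i) (π_τ j)`, so `σ` and `τ` commute.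
-/

open scoped BigOperators

/-- Modular data: a fusion ring given by structure constants `N` on a finite index set
`I` with unit index `one` and duality involution `star`, together with a complex
S-matrix `s` which is symmetric, compatible with duality, has nonvanishing first row,
squares to the duality permutation, satisfies the Verlinde formula, and whose column
ratios exhaust the characters of the fusion ring. -/
structure ModularData (I : Type) [Fintype I] [DecidableEq I] where
  one : I
  star : I → I
  N : I → I → I → ℕ
  s : I → I → ℂ
  star_involutive : Function.Involutive star
  star_one : star one = one
  assoc : ∀ i j l m, ∑ k, N i j k * N k l m = ∑ k, N j l k * N i k m
  one_mul' : ∀ i j, N one i j = (if i = j then 1 else 0)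
  mul_one' : ∀ i j, N i one j = (if i = j then 1 else 0)
  dual : ∀ i j, N i j one = (if j = star i then 1 else 0)
  s_symm : ∀ i j, s i j = s j i
  s_star : ∀ i j, s i j = s (star i) (star j)
  s_one_ne_zero : ∀ i, s one i ≠ 0
  s_mul_s : ∀ i j, ∑ k, s i k * s k j = (if j = star i then 1 else 0)
  verlinde : ∀ i j r, s one r * ∑ k, (N i j k : ℂ) * s k r = s i r * s j r
  char_column : ∀ f : I → ℂ, f one = 1 →
    (∀ i j, f i * f j = ∑ k, (N i j k : ℂ) * f k) →
    ∃ j, ∀ i, f i = s i j / s one j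

namespace ModularData

variable {I : Type} [Fintype I] [DecidableEq I] (M : ModularData I)

/-- The field generated over `ℚ` by the entries of the S-matrix. -/
noncomputable abbrev entryField : IntermediateField ℚ ℂ :=
  IntermediateField.adjoin ℚ (Set.range fun p : I × I => M.s p.1 p.2)

/-- The S-matrix with entries regarded as elements of `entryField`. -/
noncomputable def entry (i j : I) : M.entryField :=
  ⟨M.s i j, IntermediateField.subset_adjoin ℚ _ ⟨(i, j), rfl⟩⟩

@[simp] lemma coe_entry (i j : I) : (M.entry i j : ℂ) = M.s i j := rfl

lemma entry_symm (i j : I) : M.entry i j = M.entry j i := Subtype.ext (M.s_symm i j)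

lemma entry_one_ne_zero (j : I) : M.entry M.one j ≠ 0 := fun h =>
  M.s_one_ne_zero j (congrArg Subtype.val h)

/-- The column ratios are multiplicative: they are characters of the fusion ring. -/
lemma ratio_mul (i j r : I) : (M.s i r / M.s M.one r) * (M.s j r / M.s M.one r) =
    ∑ k, (M.N i j k : ℂ) * (M.s k r / M.s M.one r) := by
  have h := M.verlinde i j r
  have h0 := M.s_one_ne_zero r
  simp_rw [← mul_div_assoc, ← Finset.sum_div]
  field_simp
  linear_combination -h

lemma sum_mul_star (j : I) : ∑ i, M.s i j * M.s (M.star i) j = 1 := by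
  have h := M.s_mul_s j (M.star j)
  rw [if_pos rfl] at h
  rw [← h]
  refine Finset.sum_congr rfl fun i _ => ?_
  rw [M.s_symm i j, M.s_star (M.star i) j, M.star_involutive i]

lemma isIntegral_ratio (i r : I) : IsIntegral ℚ (M.s i r / M.s M.one r) := by
  refine isIntegral_of_smul_mem_submodule
    (Submodule.span ℚ (Set.range fun k => M.s k r / M.s M.one r)) ?_
    (Submodule.fg_span (Set.finite_range _)) _ ?_
  · rw [Submodule.ne_bot_iff]
    exact ⟨_, Submodule.subset_span ⟨M.one, rfl⟩,
      div_ne_zero (M.s_one_ne_zero r) (M.s_one_ne_zero r)⟩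
  · intro n hn
    induction hn using Submodule.span_induction with
    | mem x hx =>
      obtain ⟨j, rfl⟩ := hx
      rw [smul_eq_mul, M.ratio_mul]
      refine Submodule.sum_mem _ fun k _ => ?_
      rw [← nsmul_eq_mul]
      exact Submodule.smul_of_tower_mem _ _ (Submodule.subset_span ⟨k, rfl⟩)
    | zero => simp
    | add x y _ _ hx hy => rw [smul_add]; exact Submodule.add_mem _ hx hy
    | smul a x _ hx => rw [smul_comm]; exact Submodule.smul_mem _ _ hx

lemma isIntegral_s (i j : I) : IsIntegral ℚ (M.s i j) := by
  have h0 := M.s_one_ne_zero j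
  have hsum : ∑ i, (M.s i j / M.s M.one j) * (M.s (M.star i) j / M.s M.one j) =
      ((M.s M.one j) ^ 2)⁻¹ := by
    simp_rw [div_mul_div_comm, ← Finset.sum_div, M.sum_mul_star]
    rw [one_div, sq]
  have h1 : IsIntegral ℚ ((M.s M.one j) ^ 2)⁻¹ := by
    rw [← hsum]
    exact IsIntegral.sum _ fun k _ => (M.isIntegral_ratio _ _).mul (M.isIntegral_ratio _ _)
  have h2 : IsIntegral ℚ (M.s M.one j) :=
    IsIntegral.of_pow two_pos (by simpa using h1.inv)
  have h3 := (M.isIntegral_ratio i j).mul h2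
  rwa [div_mul_cancel₀ _ h0] at h3

/-- Every embedding of the entry field sends each column of the S-matrix to a multiple of a column.
The multipliers `ε j` are in fact `±1`; only their being integers, hence fixed by automorphisms, is
recorded. -/
lemma exists_galois_action (φ : M.entryField →ₐ[ℚ] ℂ) :
    ∃ (p : I → I) (ε : I → ℤ), ∀ i j, φ (M.entry i j) = ε j * M.s i (p j) := by
  have key : ∀ j, ∃ (k : I) (e : ℤ), ∀ i, φ (M.entry i j) = e * M.s i k := by
    intro j
    have hne : φ (M.entry M.one j) ≠ 0 := by
      simpa using M.entry_one_ne_zero j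
    obtain ⟨k, hk⟩ := M.char_column (fun i => φ (M.entry i j) / φ (M.entry M.one j))
      (div_self hne) (by
        intro a b
        have h : M.entry M.one j * ∑ k, (M.N a b k : M.entryField) * M.entry k j =
            M.entry a j * M.entry b j := by
          apply Subtype.ext
          push_cast
          exact M.verlinde a b j
        have hφ := congrArg φ h
        simp only [map_mul, map_sum, map_natCast] at hφ
        simp_rw [← mul_div_assoc, ← Finset.sum_div]
        field_simp
        linear_combination -hφ)
    have hk0 := M.s_one_ne_zero k
    set c := φ (M.entry M.one j) / M.s M.one k with hc
    have hcol : ∀ i, φ (M.entry i j) = c * M.s i k := by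
      intro i
      have := hk i
      rw [div_eq_iff hne] at this
      rw [this, hc]
      ring
    -- Comparing the two normalizations `∑ i, s i j * s i* j = 1` shows that `c² = 1`.
    have hc2 : c * c = 1 := by
      have h : ∑ i, M.entry i j * M.entry (M.star i) j = 1 := by
        apply Subtype.ext
        push_cast
        exact M.sum_mul_star j
      have hφ := congrArg φ h
      simp only [map_mul, map_sum, map_one, hcol] at hφ
      rw [← hφ, ← mul_one (c * c), ← M.sum_mul_star k, Finset.mul_sum]
      exact Finset.sum_congr rfl fun i _ => by ring
    rcases mul_self_eq_one_iff.mp hc2 with h | h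
    · exact ⟨k, 1, fun i => by rw [hcol, h]; simp⟩
    · exact ⟨k, -1, fun i => by rw [hcol, h]; simp⟩
  choose p ε h using key
  exact ⟨p, ε, fun i j => h j i⟩

lemma embedding_mem (φ : M.entryField →ₐ[ℚ] ℂ) (x : M.entryField) : φ x ∈ M.entryField := by
  obtain ⟨p, ε, h⟩ := M.exists_galois_action φ
  obtain ⟨x, hx⟩ := x
  induction hx using IntermediateField.adjoin_induction with
  | mem x hx =>
    obtain ⟨⟨i, j⟩, rfl⟩ := hx
    change φ (M.entry i j) ∈ _
    rw [h]
    exact mul_mem (intCast_mem _ _) (M.entry i (p j)).2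
  | algebraMap q =>
    exact (φ.commutes q).symm ▸ M.entryField.algebraMap_mem q
  | add x y hx hy ihx ihy =>
    have := add_mem ihx ihy
    rwa [← map_add] at this
  | mul x y hx hy ihx ihy =>
    have := mul_mem ihx ihy
    rwa [← map_mul] at this
  | inv x hx ih =>
    have := inv_mem ih
    rwa [← map_inv₀] at this

lemma finiteDimensional_entryField : FiniteDimensional ℚ M.entryField :=
  IntermediateField.finiteDimensional_adjoin (by
    rintro _ ⟨⟨i, j⟩, rfl⟩
    exact M.isIntegral_s i j)

lemma normal_entryField : Normal ℚ M.entryField := by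
  have := M.finiteDimensional_entryField
  refine normal_iff.mpr fun x => ⟨Algebra.IsIntegral.isIntegral x, ?_⟩
  refine IntermediateField.splits_of_splits (IsAlgClosed.splits _) fun y hy => ?_
  -- Each root in `ℂ` of the minimal polynomial of `x` is the image of `x` under an embedding.
  rw [← Algebra.IsAlgebraic.range_eval_eq_rootSet_minpoly] at hy
  obtain ⟨φ, rfl⟩ := hy
  exact M.embedding_mem φ x

lemma automorphisms_commute (σ τ : M.entryField ≃ₐ[ℚ] M.entryField) : σ * τ = τ * σ := by
  have key : ∀ ρ : M.entryField ≃ₐ[ℚ] M.entryField, ∃ (p : I → I) (ε : I → ℤ),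
      ∀ i j, ρ (M.entry i j) = ε j * M.entry i (p j) := by
    intro ρ
    obtain ⟨p, ε, h⟩ := M.exists_galois_action (M.entryField.val.comp ρ.toAlgHom)
    refine ⟨p, ε, fun i j => Subtype.ext ?_⟩
    push_cast
    exact h i j
  obtain ⟨p, ε, hσ⟩ := key σ
  obtain ⟨q, δ, hτ⟩ := key τ
  have hσrow : ∀ i j, σ (M.entry i j) = ε i * M.entry (p i) j := fun i j => by
    rw [M.entry_symm, hσ, M.entry_symm]
  have hhom : (σ * τ).toAlgHom = (τ * σ).toAlgHom := by
    refine IntermediateField.algHom_ext_of_eq_adjoin _ rfl ?_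
    rintro _ ⟨⟨i, j⟩, rfl⟩
    change σ (τ (M.entry i j)) = τ (σ (M.entry i j))
    rw [hτ, hσrow]
    simp only [map_mul, map_intCast, hσrow, hτ]
    ring
  exact AlgEquiv.ext fun x => DFunLike.congr_fun hhom x

end ModularData

/-- The subfield `L` of `ℂ` generated over `ℚ` by all entries of the S-matrix of modular
data is a finite Galois extension of `ℚ` with abelian Galois group. -/
theorem smatrix_field_abelian_galois {I : Type} [Fintype I] [DecidableEq I]
    (M : ModularData I) :
    FiniteDimensional ℚ
        (IntermediateField.adjoin ℚ (Set.range fun p : I × I => M.s p.1 p.2)) ∧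
      IsGalois ℚ
        (IntermediateField.adjoin ℚ (Set.range fun p : I × I => M.s p.1 p.2)) ∧
      ∀ σ τ : (IntermediateField.adjoin ℚ (Set.range fun p : I × I => M.s p.1 p.2)) ≃ₐ[ℚ]
          (IntermediateField.adjoin ℚ (Set.range fun p : I × I => M.s p.1 p.2)),
        σ * τ = τ * σ := by
  have := M.finiteDimensional_entryField
  have := M.normal_entryField
  exact ⟨inferInstance, {}, M.automorphisms_commute⟩
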